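/- If 5 ≤ k ≤ 15, then c_k ≥ 1/(k − 1/2) and c_{−k+1} ≥ 1/(k − 1/2). If k ≥ 16, then c_k ≥ 1/(4√(k−1)) and c_{−k+1} ≥ 1/(4√(k−1)). -/

import Mathlib

/-!
Bounds on `λ_k` are read off from quadratic forms: if `x·Ax ≥ c |x|²` on a `k`-dimensional
subspace, then `λ_k(A) ≥ c` (`le_eigval`).

One construction serves `c_k` and `c_{-k+1}` together. If the form of `G` is at least `c` on a
`k`-dimensional subspace, then on the vectors of that subspace with zero sum, a subspace of
dimension at least `k - 1`, the form of the complement of `G` is at most `-(c + 1) |x|²`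
(`le_cPos_cNeg_fin`). Since both constants are suprema over all orders, blowing up allows any
symmetric `0`-`1` matrix of order `m`, with diagonal entries at will, in place of a graph, and
gives the bound `c / m` (`le_cPos_cNeg`). Two such matrices are used.

* For the bound `1 / (k - 1/2)`, the rook's graph on the `3 × 3` grid with loops has the
  eigenvalue `2` or more five times on `9` vertices, and every further all-ones block of order `2`
  adds one more eigenvalue `2`; the total order is `2k - 1` (`rook_bound`).
* For the bound `1 / (4 √(k - 1))`, let `N` be the least power of two with `N ≥ k`, so that
  `N ≤ 2 (k - 1)`. A symmetric Hadamard matrix `K` of order `2N` made by Sylvester's doubling has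
  the eigenvalue `√(2N)` with multiplicity at least `N`, and `(K + J) / 2`, where `J` is the
  all-ones matrix, gives `1 / (2 √(2N))`, which is at least `1 / (4 √(k - 1))`
  (`hadamard_bound`).
-/


open Matrix BigOperators

/-- The eigenvalues (with multiplicity) of a real symmetric matrix, listed in
nondecreasing order (the empty list if the matrix is not Hermitian). -/
noncomputable def eigAsc {n : ℕ} (A : Matrix (Fin n) (Fin n) ℝ) : List ℝ := by
  classical
  exact if hA : A.IsHermitian then
    (Finset.univ.val.map hA.eigenvalues).sort (· ≤ ·)
  else []

/-- `eigval A k` is the `k`-th largest eigenvalue of `A` (1-indexed). -/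
noncomputable def eigval {n : ℕ} (A : Matrix (Fin n) (Fin n) ℝ) (k : ℕ) : ℝ :=
  (eigAsc A).getD (n - k) 0

/-- The singular values (absolute values of eigenvalues, with multiplicity) of a
real symmetric matrix, listed in nondecreasing order. -/
noncomputable def singAsc {n : ℕ} (A : Matrix (Fin n) (Fin n) ℝ) : List ℝ := by
  classical
  exact if hA : A.IsHermitian then
    (Finset.univ.val.map (fun i => |hA.eigenvalues i|)).sort (· ≤ ·)
  else []

/-- `singval A k` is the `k`-th largest singular value of `A` (1-indexed). -/
noncomputable def singval {n : ℕ} (A : Matrix (Fin n) (Fin n) ℝ) (k : ℕ) : ℝ :=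
  (singAsc A).getD (n - k) 0

/-- `graphEig G k` is the `k`-th largest adjacency eigenvalue of `G` (1-indexed). -/
noncomputable def graphEig {n : ℕ} (G : SimpleGraph (Fin n)) (k : ℕ) : ℝ := by
  classical
  exact eigval (G.adjMatrix ℝ) k

/-- `graphSing G k` is the `k`-th largest singular value of `G` (1-indexed). -/
noncomputable def graphSing {n : ℕ} (G : SimpleGraph (Fin n)) (k : ℕ) : ℝ := by
  classical
  exact singval (G.adjMatrix ℝ) k

/-- `cPos k` is the supremum of `λ_k(G)/n` over all graphs `G` of order `n ≥ k`. -/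
noncomputable def cPos (k : ℕ) : ℝ :=
  sSup { x : ℝ | ∃ n : ℕ, k ≤ n ∧ ∃ G : SimpleGraph (Fin n), x = graphEig G k / n }

/-- `cNeg k` is the supremum of `|λ_{n-k+1}(G)|/n` over all graphs `G` of order `n ≥ k`. -/
noncomputable def cNeg (k : ℕ) : ℝ :=
  sSup { x : ℝ | ∃ n : ℕ, k ≤ n ∧ ∃ G : SimpleGraph (Fin n), x = |graphEig G (n - k + 1)| / n }

/-! ### Min-max estimates for sorted eigenvalues -/

/-- The quadratic form of a symmetric matrix in coordinates with respect to an orthonormal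
eigenbasis. -/
lemma spectral_form {n : ℕ} {A : Matrix (Fin n) (Fin n) ℝ} (hA : A.IsHermitian)
    (x : Fin n → ℝ) :
    x ⬝ᵥ (A *ᵥ x) = ∑ i, hA.eigenvalues i *
        (((star (hA.eigenvectorUnitary : Matrix (Fin n) (Fin n) ℝ)) *ᵥ x) i) ^ 2 ∧
    x ⬝ᵥ x = ∑ i, (((star (hA.eigenvectorUnitary : Matrix (Fin n) (Fin n) ℝ)) *ᵥ x) i) ^ 2 := by
  set U : Matrix (Fin n) (Fin n) ℝ := ↑hA.eigenvectorUnitary with hU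
  have hUU : U * star U = 1 := Unitary.mul_star_self_of_mem hA.eigenvectorUnitary.2
  have hst : star U = Uᵀ := by
    rw [star_eq_conjTranspose, conjTranspose_eq_transpose_of_trivial]
  have key : ∀ z : Fin n → ℝ, x ⬝ᵥ (U *ᵥ z) = (star U *ᵥ x) ⬝ᵥ z := by
    intro z
    rw [hst, mulVec_transpose, dotProduct_mulVec]
  constructor
  · have h := hA.spectral_theorem
    rw [Unitary.conjStarAlgAut_apply, ← hU] at h
    have h2 : A *ᵥ x = U *ᵥ (diagonal (hA.eigenvalues) *ᵥ (star U *ᵥ x)) := by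
      conv_lhs => rw [h]
      rw [← mulVec_mulVec, ← mulVec_mulVec]
      rfl
    rw [h2, key, dotProduct]
    refine Finset.sum_congr rfl fun i _ => ?_
    rw [mulVec_diagonal]
    ring
  · have h2 : x = U *ᵥ (star U *ᵥ x) := by rw [mulVec_mulVec, hUU, one_mulVec]
    have h3 := key (star U *ᵥ x)
    rw [← h2] at h3
    rw [h3, dotProduct]
    exact Finset.sum_congr rfl fun i _ => by ring

/-- The dimension count behind the min-max principle: if `W` is too large to avoid the span of
the eigenvectors indexed by `s`, then it contains a nonzero vector of that span; `y` is its
vector of coordinates in the eigenbasis. -/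
lemma exists_mem_eigenspan {n : ℕ} {A : Matrix (Fin n) (Fin n) ℝ} (hA : A.IsHermitian)
    (W : Submodule ℝ (Fin n → ℝ)) (s : Finset (Fin n))
    (h : n < s.card + Module.finrank ℝ W) :
    ∃ x ∈ W, ∃ y : Fin n → ℝ, (∃ i ∈ s, y i ≠ 0) ∧ (∀ i, i ∉ s → y i = 0) ∧
      x ⬝ᵥ (A *ᵥ x) = ∑ i, hA.eigenvalues i * y i ^ 2 ∧ x ⬝ᵥ x = ∑ i, y i ^ 2 := by
  set V : Matrix (Fin n) (Fin n) ℝ :=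
    star (hA.eigenvectorUnitary : Matrix (Fin n) (Fin n) ℝ) with hV
  let f : W →ₗ[ℝ] ({i // i ∉ s} → ℝ) :=
    (LinearMap.funLeft ℝ ℝ (Subtype.val)) ∘ₗ V.mulVecLin ∘ₗ W.subtype
  have hf : LinearMap.ker f ≠ ⊥ := by
    apply LinearMap.ker_ne_bot_of_finrank_lt
    have h1 : Fintype.card {i // i ∉ s} = n - s.card := by
      rw [Fintype.card_subtype_compl]; simp
    rw [Module.finrank_fintype_fun_eq_card, h1]
    have := s.card_le_univ
    simp at this
    omega
  obtain ⟨⟨x, hxW⟩, hxk, hx0⟩ := Submodule.exists_mem_ne_zero_of_ne_bot hf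
  have hx0' : x ≠ 0 := fun h0 => hx0 (by simpa using h0)
  have hy : ∀ i, i ∉ s → (V *ᵥ x) i = 0 := fun i hi => congrFun (LinearMap.mem_ker.1 hxk) ⟨i, hi⟩
  obtain ⟨h1, h2⟩ := spectral_form hA x
  refine ⟨x, hxW, V *ᵥ x, ?_, hy, h1, h2⟩
  by_contra! hcon
  have : x ⬝ᵥ x = 0 := by
    rw [h2]
    refine Finset.sum_eq_zero fun i _ => ?_
    by_cases hi : i ∈ s
    · rw [hcon i hi]; norm_num
    · rw [hy i hi]; norm_num
  exact hx0' (dotProduct_self_eq_zero.1 this)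

lemma eigAsc_eq {n : ℕ} {A : Matrix (Fin n) (Fin n) ℝ} (hA : A.IsHermitian) :
    eigAsc A = (Finset.univ.val.map hA.eigenvalues).sort (· ≤ ·) := by
  unfold eigAsc
  rw [dif_pos hA]

lemma length_eigAsc {n : ℕ} {A : Matrix (Fin n) (Fin n) ℝ} (hA : A.IsHermitian) :
    (eigAsc A).length = n := by
  simp [eigAsc_eq hA]

lemma countP_eigAsc {n : ℕ} {A : Matrix (Fin n) (Fin n) ℝ} (hA : A.IsHermitian)
    (p : ℝ → Prop) [DecidablePred p] :
    (eigAsc A).countP (fun a => decide (p a)) =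
      (Finset.univ.filter fun i => p (hA.eigenvalues i)).card := by
  rw [← Multiset.coe_countP, eigAsc_eq hA, Multiset.sort_eq, Multiset.countP_map]
  rfl

lemma pairwise_eigAsc {n : ℕ} {A : Matrix (Fin n) (Fin n) ℝ} (hA : A.IsHermitian) :
    (eigAsc A).Pairwise (· ≤ ·) := by
  rw [eigAsc_eq hA]; exact Multiset.pairwise_sort _ _

/-- A sorted list whose entry at position `j` is below `c` has its first `j + 1` entries below
`c`. -/
lemma card_eigenvalues_lt {n : ℕ} {A : Matrix (Fin n) (Fin n) ℝ} (hA : A.IsHermitian)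
    {j : ℕ} (hj : j < n) {c : ℝ} (h : (eigAsc A).getD j 0 < c) :
    j + 1 ≤ (Finset.univ.filter fun i => hA.eigenvalues i < c).card := by
  have hl := length_eigAsc hA
  have hp := pairwise_eigAsc hA
  have hj' : j < (eigAsc A).length := by omega
  rw [List.getD_eq_getElem _ _ hj'] at h
  rw [← countP_eigAsc hA (· < c)]
  have h1 : ((eigAsc A).take (j + 1)).countP (fun a => decide (a < c)) = j + 1 := by
    rw [List.countP_eq_length.2]
    · simp [hl]; omega
    · intro a ha
      obtain ⟨i, hi, rfl⟩ := List.mem_iff_getElem.1 ha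
      rw [List.getElem_take, decide_eq_true_eq]
      refine lt_of_le_of_lt ?_ h
      rw [List.length_take] at hi
      rcases (show i < j ∨ i = j by omega) with hij | rfl
      · exact List.pairwise_iff_getElem.1 hp i j _ _ hij
      · exact le_rfl
  calc j + 1 = _ := h1.symm
    _ ≤ _ := (List.take_sublist _ _).countP_le

lemma card_eigenvalues_gt {n : ℕ} {A : Matrix (Fin n) (Fin n) ℝ} (hA : A.IsHermitian)
    {j : ℕ} (hj : j < n) {c : ℝ} (h : c < (eigAsc A).getD j 0) :
    n - j ≤ (Finset.univ.filter fun i => c < hA.eigenvalues i).card := by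
  have hl := length_eigAsc hA
  have hp := pairwise_eigAsc hA
  have hj' : j < (eigAsc A).length := by omega
  rw [List.getD_eq_getElem _ _ hj'] at h
  rw [← countP_eigAsc hA (c < ·)]
  have h1 : ((eigAsc A).drop j).countP (fun a => decide (c < a)) = n - j := by
    rw [List.countP_eq_length.2]
    · simp [hl]
    · intro a ha
      obtain ⟨i, hi, rfl⟩ := List.mem_iff_getElem.1 ha
      rw [List.getElem_drop, decide_eq_true_eq]
      refine lt_of_lt_of_le h ?_
      rcases Nat.eq_zero_or_pos i with rfl | hi0
      · simp
      · exact List.pairwise_iff_getElem.1 hp j (j + i) _ _ (by omega)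
  calc n - j = _ := h1.symm
    _ ≤ _ := (List.drop_sublist _ _).countP_le

/-- Half of the min-max principle: the quadratic form is at least `c` on a `k`-dimensional
subspace, so the `k`-th largest eigenvalue is at least `c`. -/
lemma le_eigval {n : ℕ} {A : Matrix (Fin n) (Fin n) ℝ} (hA : A.IsHermitian)
    (W : Submodule ℝ (Fin n → ℝ)) {k : ℕ} (hk : 1 ≤ k) (hkW : k ≤ Module.finrank ℝ W) {c : ℝ}
    (hW : ∀ x ∈ W, c * (x ⬝ᵥ x) ≤ x ⬝ᵥ (A *ᵥ x)) : c ≤ eigval A k := by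
  have hWn : Module.finrank ℝ W ≤ n := by simpa using W.finrank_le
  by_contra! hlt
  have hc := card_eigenvalues_lt hA (j := n - k) (by omega) hlt
  obtain ⟨x, hx, y, ⟨i, hi, hyi⟩, hy, h1, h2⟩ := exists_mem_eigenspan hA W
    (Finset.univ.filter fun i => hA.eigenvalues i < c) (by omega)
  have := hW x hx
  rw [h1, h2, Finset.mul_sum] at this
  refine absurd this (not_le.2 (Finset.sum_lt_sum (fun a _ => ?_) ⟨i, Finset.mem_univ _, ?_⟩))
  · by_cases ha : hA.eigenvalues a < c
    · exact mul_le_mul_of_nonneg_right ha.le (sq_nonneg _)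
    · rw [hy a (by simpa using ha)]; simp
  · exact mul_lt_mul_of_pos_right (by simpa using hi) (by positivity)

/-- The companion of `le_eigval` for the `k`-th smallest eigenvalue. -/
lemma eigval_le {n : ℕ} {A : Matrix (Fin n) (Fin n) ℝ} (hA : A.IsHermitian)
    (W : Submodule ℝ (Fin n → ℝ)) {k : ℕ} (hk : 1 ≤ k) (hkW : k ≤ Module.finrank ℝ W) {c : ℝ}
    (hW : ∀ x ∈ W, x ⬝ᵥ (A *ᵥ x) ≤ c * (x ⬝ᵥ x)) : eigval A (n - k + 1) ≤ c := by
  have hWn : Module.finrank ℝ W ≤ n := by simpa using W.finrank_le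
  by_contra! hlt
  have hc := card_eigenvalues_gt hA (j := n - (n - k + 1)) (by omega) hlt
  obtain ⟨x, hx, y, ⟨i, hi, hyi⟩, hy, h1, h2⟩ := exists_mem_eigenspan hA W
    (Finset.univ.filter fun i => c < hA.eigenvalues i) (by omega)
  have := hW x hx
  rw [h1, h2, Finset.mul_sum] at this
  refine absurd this (not_le.2 (Finset.sum_lt_sum (fun a _ => ?_) ⟨i, Finset.mem_univ _, ?_⟩))
  · by_cases ha : c < hA.eigenvalues a
    · exact mul_le_mul_of_nonneg_right ha.le (sq_nonneg _)
    · rw [hy a (by simpa using ha)]; simp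
  · exact mul_lt_mul_of_pos_right (by simpa using hi) (by positivity)

/-! ### The constants `cPos` and `cNeg` -/

open Classical in
/-- The crude bound `|λ_k(G)| ≤ n`, which makes the suprema `cPos` and `cNeg` finite. -/
lemma abs_graphEig_le {n : ℕ} (G : SimpleGraph (Fin n)) (k : ℕ) : |graphEig G k| ≤ n := by
  have hA : (G.adjMatrix ℝ).IsHermitian := G.isHermitian_adjMatrix ℝ
  unfold graphEig eigval
  by_cases hlt : n - k < (eigAsc (G.adjMatrix ℝ)).length
  · rw [List.getD_eq_getElem _ _ hlt]
    have hm := List.getElem_mem hlt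
    generalize (eigAsc (G.adjMatrix ℝ))[n - k] = μ at hm ⊢
    rw [eigAsc_eq hA, Multiset.mem_sort, Multiset.mem_map] at hm
    obtain ⟨i, -, rfl⟩ := hm
    have hev : Module.End.HasEigenvalue (Matrix.toLin' (G.adjMatrix ℝ)) (hA.eigenvalues i) := by
      refine Module.End.hasEigenvalue_of_hasEigenvector
        (x := (hA.eigenvectorBasis i).ofLp) ⟨?_, ?_⟩
      · rw [Module.End.mem_eigenspace_iff, Matrix.toLin'_apply]
        exact hA.mulVec_eigenvectorBasis i
      · intro h0
        have := hA.eigenvectorBasis.orthonormal.ne_zero i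
        exact this (by ext j; exact congrFun h0 j)
    obtain ⟨v, hv⟩ := eigenvalue_mem_ball hev
    rw [Metric.mem_closedBall, Real.dist_eq, SimpleGraph.adjMatrix_apply,
      if_neg (G.irrefl), sub_zero] at hv
    refine hv.trans ?_
    calc ∑ j ∈ Finset.univ.erase v, ‖G.adjMatrix ℝ v j‖
        ≤ ∑ j ∈ Finset.univ.erase v, (1 : ℝ) := by
          refine Finset.sum_le_sum fun j _ => ?_
          rw [SimpleGraph.adjMatrix_apply]; split_ifs <;> simp
      _ ≤ n := by
          rw [Finset.sum_const, nsmul_eq_mul, mul_one]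
          exact_mod_cast (Finset.card_le_univ _).trans (by simp)
  · rw [List.getD_eq_default _ _ (not_lt.1 hlt)]; simp

lemma le_cPos {n k : ℕ} (h : k ≤ n) (G : SimpleGraph (Fin n)) : graphEig G k / n ≤ cPos k := by
  refine le_csSup ⟨1, ?_⟩ ⟨n, h, G, rfl⟩
  rintro _ ⟨m, -, H, rfl⟩
  exact div_le_one_of_le₀ ((le_abs_self _).trans (abs_graphEig_le H k)) (by positivity)

lemma le_cNeg {n k : ℕ} (h : k ≤ n) (G : SimpleGraph (Fin n)) :
    |graphEig G (n - k + 1)| / n ≤ cNeg k := by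
  refine le_csSup ⟨1, ?_⟩ ⟨n, h, G, rfl⟩
  rintro _ ⟨m, -, H, rfl⟩
  exact div_le_one_of_le₀ (abs_graphEig_le H _) (by positivity)

open Classical in
/-- A graph whose form is at least `c` on a `k`-dimensional subspace bounds both constants: the
second one through the complement, whose adjacency form is `-|x|² - x·Ax` on the hyperplane of
vectors with zero sum. -/
lemma le_cPos_cNeg_fin {n : ℕ} (G : SimpleGraph (Fin n)) (W : Submodule ℝ (Fin n → ℝ)) {k : ℕ}
    (hk : 2 ≤ k) (hkW : k ≤ Module.finrank ℝ W) {c : ℝ}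
    (hW : ∀ x ∈ W, c * (x ⬝ᵥ x) ≤ x ⬝ᵥ (G.adjMatrix ℝ *ᵥ x)) :
    c / n ≤ cPos k ∧ c / n ≤ cNeg (k - 1) := by
  have hWn : Module.finrank ℝ W ≤ n := by simpa using W.finrank_le
  have hA : (G.adjMatrix ℝ).IsHermitian := G.isHermitian_adjMatrix ℝ
  have hB : (Gᶜ.adjMatrix ℝ).IsHermitian := Gᶜ.isHermitian_adjMatrix ℝ
  constructor
  · refine le_trans ?_ (le_cPos (by omega) G)
    gcongr
    exact le_eigval hA W (by omega) hkW hW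
  · refine le_trans ?_ (le_cNeg (by omega) Gᶜ)
    gcongr
    let σ : (Fin n → ℝ) →ₗ[ℝ] ℝ := ∑ i, LinearMap.proj i
    have hσ : ∀ x, σ x = ∑ i, x i := fun x => by simp [σ]
    have hdim : k - 1 ≤ Module.finrank ℝ (W ⊓ LinearMap.ker σ : Submodule ℝ (Fin n → ℝ)) := by
      have h1 := Submodule.finrank_sup_add_finrank_inf_eq W (LinearMap.ker σ)
      have h2 := σ.finrank_range_add_finrank_ker
      have h3 : Module.finrank ℝ (LinearMap.range σ) ≤ 1 := by
        simpa using (LinearMap.range σ).finrank_le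
      have h4 : Module.finrank ℝ (W ⊔ LinearMap.ker σ : Submodule ℝ (Fin n → ℝ)) ≤ n := by
        simpa using (W ⊔ LinearMap.ker σ).finrank_le
      simp only [Module.finrank_fintype_fun_eq_card, Fintype.card_fin] at h2
      omega
    have hadj : Gᶜ.adjMatrix ℝ = (Matrix.of fun _ _ => (1 : ℝ)) - 1 - G.adjMatrix ℝ := by
      ext i j
      simp only [SimpleGraph.adjMatrix_apply, SimpleGraph.compl_adj, Matrix.sub_apply, of_apply,
        Matrix.one_apply]
      by_cases hij : i = j
      · subst hij; simp
      · by_cases hG : G.Adj i j <;> simp [hij, hG]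
    have := eigval_le hB (W ⊓ LinearMap.ker σ) (k := k - 1) (by omega) hdim (c := -c) (by
      rintro x ⟨hx, hx0⟩
      have hs : ∑ i, x i = 0 := by rw [← hσ]; exact hx0
      have h0 : (Matrix.of fun _ _ => (1 : ℝ) : Matrix (Fin n) (Fin n) ℝ) *ᵥ x = 0 := by
        ext i; simp [mulVec, dotProduct, hs]
      rw [hadj, sub_mulVec, sub_mulVec, h0, one_mulVec, dotProduct_sub, dotProduct_sub,
        dotProduct_zero]
      have := hW x hx
      have h5 : 0 ≤ x ⬝ᵥ x := Finset.sum_nonneg fun i _ => mul_self_nonneg (x i)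
      linarith)
    have hneg : graphEig Gᶜ (n - (k - 1) + 1) ≤ -c := by unfold graphEig; convert this
    exact (le_neg.1 hneg).trans (neg_le_abs _)

/-- Closed blow-up. A symmetric `0`-`1` matrix `M` of order `m`, possibly with ones on the
diagonal, whose form is at least `c` on a `k`-dimensional subspace gives graphs of order `m * t`
by replacing each index with `t` vertices. The form of such a graph on the lifted subspace is at
least `t * c - 1`, and `t → ∞` gives the bound `c / m`. -/
lemma le_cPos_cNeg {ι : Type*} [Fintype ι] (M : Matrix ι ι ℝ)
    (hsymm : ∀ i j, M i j = M j i) (h01 : ∀ i j, M i j = 0 ∨ M i j = 1)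
    (W : Submodule ℝ (ι → ℝ)) {k : ℕ} (hk : 2 ≤ k) (hkW : k ≤ Module.finrank ℝ W) {c : ℝ}
    (hW : ∀ x ∈ W, c * (x ⬝ᵥ x) ≤ x ⬝ᵥ (M *ᵥ x)) :
    c / Fintype.card ι ≤ cPos k ∧ c / Fintype.card ι ≤ cNeg (k - 1) := by
  classical
  have hm : 2 ≤ Fintype.card ι := by
    have : Module.finrank ℝ W ≤ Fintype.card ι := by simpa using W.finrank_le
    omega
  set m := Fintype.card ι with hmdef
  have key : ∀ t : ℕ, 1 ≤ t →
      ((t * c - 1) / (m * t : ℕ) ≤ cPos k ∧ (t * c - 1) / (m * t : ℕ) ≤ cNeg (k - 1)) := by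
    intro t ht
    have e : Fin (m * t) ≃ ι × Fin t :=
      (Fintype.equivFinOfCardEq (by simp [hmdef])).symm
    let π : Fin (m * t) → ι := fun a => (e a).1
    have hπ : Function.Surjective π := fun i => ⟨e.symm (i, ⟨0, ht⟩), by simp [π]⟩
    have hsum : ∀ f : ι → ℝ, ∑ a, f (π a) = t * ∑ i, f i := by
      intro f
      rw [e.sum_comp (fun p => f p.1), Fintype.sum_prod_type]
      simp [Finset.mul_sum]
    let G : SimpleGraph (Fin (m * t)) :=
      { Adj := fun a b => a ≠ b ∧ M (π a) (π b) = 1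
        symm := ⟨fun a b h => ⟨h.1.symm, by rw [hsymm]; exact h.2⟩⟩
        loopless := ⟨fun a h => h.1 rfl⟩ }
    have hG : ∀ _ : DecidableRel G.Adj,
        G.adjMatrix ℝ = M.submatrix π π - diagonal fun a => M (π a) (π a) := by
      intro _
      ext a b
      rw [SimpleGraph.adjMatrix_apply, Matrix.sub_apply, submatrix_apply]
      by_cases hab : a = b
      · subst hab; simp
      · rcases h01 (π a) (π b) with h | h <;> simp [G, hab, h]
    let L := LinearMap.funLeft ℝ ℝ π
    have hL : Function.Injective L := LinearMap.funLeft_injective_of_surjective ℝ ℝ π hπ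
    refine le_cPos_cNeg_fin G (W.map L) hk
      (by rw [(Submodule.equivMapOfInjective L hL W).symm.finrank_eq]; exact hkW) ?_
    rintro _ ⟨w, hw, rfl⟩
    have hLw : L w = fun a => w (π a) := rfl
    have h1 : L w ⬝ᵥ L w = t * (w ⬝ᵥ w) := by
      rw [hLw]; exact hsum fun i => w i * w i
    have h2 : L w ⬝ᵥ (M.submatrix π π *ᵥ L w) = t * (t * (w ⬝ᵥ (M *ᵥ w))) := by
      have : M.submatrix π π *ᵥ L w = fun a => t * (M *ᵥ w) (π a) := by
        ext a
        exact hsum fun j => M (π a) j * w j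
      rw [this, hLw]
      refine (hsum fun i => w i * (t * (M *ᵥ w) i)).trans ?_
      simp only [dotProduct, Finset.mul_sum]
      exact Finset.sum_congr rfl fun i _ => by ring
    have h3 : L w ⬝ᵥ (diagonal (fun a => M (π a) (π a)) *ᵥ L w) ≤ L w ⬝ᵥ L w := by
      refine Finset.sum_le_sum fun a _ => ?_
      rw [mulVec_diagonal]
      rcases h01 (π a) (π a) with h | h <;> rw [h]
      · simpa using mul_self_nonneg (L w a)
      · simp
    have h4 := hW w hw
    have ht0 : (0 : ℝ) ≤ t := by positivity
    rw [hG, sub_mulVec, dotProduct_sub, h2]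
    have h5 := mul_le_mul_of_nonneg_left h4 (mul_nonneg ht0 ht0)
    rw [h1] at h3 ⊢
    linarith
  have hm0 : (0 : ℝ) < m := by positivity
  have lim : ∀ B : ℝ, (∀ t : ℕ, 1 ≤ t → (t * c - 1) / (m * t : ℕ) ≤ B) → c / m ≤ B := by
    intro B hB
    refine le_of_forall_pos_le_add fun ε hε => ?_
    obtain ⟨t, ht⟩ := exists_nat_gt (1 / ε)
    have ht0 : (0 : ℝ) < t := lt_trans (by positivity) ht
    have ht1 : 1 ≤ t := by exact_mod_cast ht0
    have h := hB t ht1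
    push_cast at h
    rw [div_lt_iff₀ hε] at ht
    have hm1 : (1 : ℝ) ≤ m := by exact_mod_cast (by omega : 1 ≤ m)
    have h6 : 1 / (m * t : ℝ) ≤ ε := by
      rw [div_le_iff₀ (by positivity)]
      nlinarith [mul_le_mul_of_nonneg_right hm1 (mul_pos ht0 hε).le]
    have h7 : c / m = (t * c - 1) / (m * t : ℝ) + 1 / (m * t : ℝ) := by
      field_simp; ring
    linarith
  exact ⟨lim _ fun t ht => (key t ht).1, lim _ fun t ht => (key t ht).2⟩

/-! ### Hadamard matrices -/

/-- Sylvester's doubling: symmetric Hadamard matrices exist in every order `2 ^ j`. -/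
lemma exists_symm_hadamard (j : ℕ) : ∃ (ι : Type) (_ : Fintype ι) (_ : DecidableEq ι)
    (H : Matrix ι ι ℝ), Fintype.card ι = 2 ^ j ∧ Hᵀ = H ∧ (∀ a b, H a b = 1 ∨ H a b = -1) ∧
      H * H = (2 ^ j : ℝ) • (1 : Matrix ι ι ℝ) := by
  induction j with
  | zero =>
    refine ⟨Unit, inferInstance, inferInstance, 1, by simp, by simp, by simp, by simp⟩
  | succ j ih =>
    obtain ⟨ι, _, _, H, hc, hs, h1, h2⟩ := ih
    refine ⟨ι ⊕ ι, inferInstance, inferInstance, fromBlocks H H H (-H), ?_, ?_, ?_, ?_⟩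
    · rw [Fintype.card_sum, hc]; ring
    · simp [fromBlocks_transpose, hs]
    · rintro (a | a) (b | b) <;> rcases h1 a b with h | h <;> simp [h]
    · rw [fromBlocks_multiply, ← fromBlocks_one, fromBlocks_smul]
      simp [h2, ← two_smul ℝ, smul_smul, pow_succ, mul_comm]

/-- With `N = 2 ^ j ≥ k`, a symmetric Hadamard matrix `K` of order `2 * N` has the eigenvalue
`√(2 * N)` with multiplicity at least `N`. The `0`-`1` matrix `(K + J) / 2`, with `J` the
positive semidefinite all-ones matrix, then has form at least `√(2 * N) / 2` on that eigenspace. -/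
lemma hadamard_bound {j k : ℕ} (hk : 2 ≤ k) (hkj : k ≤ 2 ^ j) :
    1 / (2 * Real.sqrt (2 * 2 ^ j)) ≤ cPos k ∧
      1 / (2 * Real.sqrt (2 * 2 ^ j)) ≤ cNeg (k - 1) := by
  obtain ⟨ι, _, _, H, hc, hs, h1, h2⟩ := exists_symm_hadamard j
  set N : ℝ := 2 ^ j with hN
  have hN0 : 0 < N := by positivity
  set s := Real.sqrt (2 * N) with hsdef
  have hs0 : 0 < s := by positivity
  have hss : s * s = 2 * N := Real.mul_self_sqrt (by positivity)
  set K : Matrix (ι ⊕ ι) (ι ⊕ ι) ℝ := fromBlocks H H H (-H) with hK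
  have hKs : Kᵀ = K := by simp [hK, fromBlocks_transpose, hs]
  have hK1 : ∀ a b, K a b = 1 ∨ K a b = -1 := by
    rintro (a | a) (b | b) <;> rcases h1 a b with h | h <;> simp [hK, h]
  let J : Matrix (ι ⊕ ι) (ι ⊕ ι) ℝ := Matrix.of fun _ _ => 1
  let M : Matrix (ι ⊕ ι) (ι ⊕ ι) ℝ := (1 / 2 : ℝ) • (K + J)
  -- the eigenspace is the graph of the map sending `x` to `(s / N) • H x - x`
  let T : (ι → ℝ) →ₗ[ℝ] (ι ⊕ ι → ℝ) :=
    { toFun := fun x => Sum.elim x ((s / N) • (H *ᵥ x) - x)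
      map_add' := by
        intro x y; ext (a | a) <;> simp [mulVec_add]; ring
      map_smul' := by
        intro r x; ext (a | a) <;> simp [mulVec_smul]; ring }
  have hT : Function.Injective T := by
    intro x y h
    ext a
    exact congrFun h (Sum.inl a)
  have hHH : ∀ x, H *ᵥ (H *ᵥ x) = N • x := by
    intro x
    rw [mulVec_mulVec, h2, smul_mulVec, one_mulVec]
  have hKT : ∀ x, K *ᵥ T x = s • T x := by
    intro x
    have hTx : T x = Sum.elim x ((s / N) • (H *ᵥ x) - x) := rfl
    rw [hTx, hK, fromBlocks_mulVec]
    ext (a | a)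
    · simp only [Sum.elim_comp_inl, Sum.elim_comp_inr, Sum.elim_inl, Pi.smul_apply, Pi.add_apply,
        mulVec_sub, mulVec_smul, hHH, Pi.sub_apply, smul_eq_mul]
      field_simp; ring
    · simp only [Sum.elim_comp_inl, Sum.elim_comp_inr, Sum.elim_inr, Pi.smul_apply, Pi.add_apply,
        mulVec_sub, mulVec_smul, hHH, Pi.sub_apply, smul_eq_mul, neg_mulVec, Pi.neg_apply]
      field_simp
      linear_combination (-(H *ᵥ x) a) * hss
  have := le_cPos_cNeg M
    (fun a b => by
      have : K a b = K b a := congrFun (congrFun hKs b) a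
      simp [M, J, this])
    (fun a b => by rcases hK1 a b with h | h <;> simp [M, J, h]; norm_num)
    (LinearMap.range T) hk
    (by rw [LinearMap.finrank_range_of_inj hT, Module.finrank_fintype_fun_eq_card, hc]; exact hkj)
    (c := s / 2) (by
      rintro _ ⟨x, rfl⟩
      have hJ : T x ⬝ᵥ (J *ᵥ T x) = (∑ a, T x a) * ∑ a, T x a := by
        have : J *ᵥ T x = fun _ => ∑ a, T x a := by
          ext a; simp [J, mulVec, dotProduct]
        rw [this, dotProduct, Finset.sum_mul]
      rw [smul_mulVec, add_mulVec, dotProduct_smul, dotProduct_add, hJ, hKT, dotProduct_smul,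
        smul_eq_mul, smul_eq_mul]
      nlinarith [mul_self_nonneg (∑ a, T x a)])
  have hval : s / 2 / (Fintype.card (ι ⊕ ι) : ℝ) = 1 / (2 * s) := by
    rw [Fintype.card_sum, hc]
    push_cast
    rw [← hN]
    field_simp
    linear_combination hss
  rwa [hval] at this

/-! ### The rook's graph -/

/-- The `0`-`1` matrix of order `9 + 2 * r`, at least `5 + r` of whose eigenvalues are `2` or
more: the adjacency matrix of the `3 × 3` rook's graph (the Paley graph of order `9`) with a loop
at every vertex, whose eigenvalues are `5, 2, 2, 2, 2, -1, -1, -1, -1`, together with `r` all-ones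
blocks of order `2`. -/
def rookMatrix (r : ℕ) :
    Matrix ((Fin 3 × Fin 3) ⊕ (Fin r × Fin 2)) ((Fin 3 × Fin 3) ⊕ (Fin r × Fin 2)) ℝ :=
  fromBlocks (Matrix.of fun p q => if p.1 = q.1 ∨ p.2 = q.2 then 1 else 0) 0 0
    (Matrix.of fun p q => if p.1 = q.1 then 1 else 0)

lemma rook_bound (r : ℕ) :
    (2 : ℝ) / (9 + 2 * r) ≤ cPos (5 + r) ∧ (2 : ℝ) / (9 + 2 * r) ≤ cNeg (5 + r - 1) := by
  -- functions `f i + g j`, with `f 2 = 0` for uniqueness, on the grid; constants on each block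
  let T : (Fin 5 ⊕ Fin r → ℝ) →ₗ[ℝ] ((Fin 3 × Fin 3) ⊕ (Fin r × Fin 2) → ℝ) :=
    { toFun := fun u => Sum.elim
        (fun p => ![u (Sum.inl 0), u (Sum.inl 1), 0] p.1 +
          ![u (Sum.inl 2), u (Sum.inl 3), u (Sum.inl 4)] p.2)
        (fun p => u (Sum.inr p.1))
      map_add' := by
        intro x y; ext (⟨a, b⟩ | a)
        · fin_cases a <;> fin_cases b <;> simp <;> ring
        · simp
      map_smul' := by
        intro c x; ext (⟨a, b⟩ | a)
        · fin_cases a <;> fin_cases b <;> simp <;> ring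
        · simp }
  have hT : Function.Injective T := by
    intro x y h
    have h2 : ∀ i j, T x (Sum.inl (i, j)) = T y (Sum.inl (i, j)) := fun i j => by rw [h]
    have e1 := h2 2 0
    have e2 := h2 2 1
    have e3 := h2 2 2
    have e4 := h2 0 0
    have e5 := h2 1 0
    simp [T] at e1 e2 e3 e4 e5
    ext (a | a)
    · fin_cases a <;> simp <;> linarith
    · exact congrFun h (Sum.inr (a, 0))
  have := le_cPos_cNeg (rookMatrix r)
    (fun a b => by
      rcases a with a | a <;> rcases b with b | b <;> simp [rookMatrix, eq_comm])
    (fun a b => by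
      rcases a with a | a <;> rcases b with b | b <;> simp [rookMatrix] <;> tauto)
    (LinearMap.range T) (k := 5 + r) (by omega)
    (by rw [LinearMap.finrank_range_of_inj hT, Module.finrank_fintype_fun_eq_card]; simp)
    (c := 2) (by
      rintro _ ⟨u, rfl⟩
      have hTu : T u = Sum.elim
        (fun p => ![u (Sum.inl 0), u (Sum.inl 1), 0] p.1 +
          ![u (Sum.inl 2), u (Sum.inl 3), u (Sum.inl 4)] p.2)
        (fun p => u (Sum.inr p.1)) := rfl
      rw [hTu, rookMatrix, fromBlocks_mulVec]
      simp only [dotProduct, Fintype.sum_sum_type, Sum.elim_inl, Sum.elim_inr, Sum.elim_comp_inl,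
        Sum.elim_comp_inr, zero_mulVec, add_zero, zero_add, Fintype.sum_prod_type, mulVec,
        of_apply, ite_mul, one_mul, zero_mul, Fin.sum_univ_two, Fin.sum_univ_three]
      generalize u (Sum.inl 0) = a
      generalize u (Sum.inl 1) = b
      generalize u (Sum.inl 2) = p
      generalize u (Sum.inl 3) = q
      generalize u (Sum.inl 4) = t
      simp [Finset.sum_add_distrib]
      have h2 : ∀ z : ℝ, z * (z + z) = z * z + z * z := fun z => mul_add z z z
      simp only [h2, Finset.sum_add_distrib]
      -- the difference of the two sides is three times this square
      nlinarith [sq_nonneg (a + b + p + q + t)])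
  have hcard : (Fintype.card ((Fin 3 × Fin 3) ⊕ (Fin r × Fin 2)) : ℝ) = 9 + 2 * r := by
    simp; ring
  rwa [hcard] at this

/-! ### The two bounds -/

theorem stmt5 (k : ℕ) :
    (5 ≤ k → k ≤ 15 →
      cPos k ≥ 1 / ((k : ℝ) - 1 / 2) ∧ cNeg (k - 1) ≥ 1 / ((k : ℝ) - 1 / 2)) ∧
    (16 ≤ k →
      cPos k ≥ 1 / (4 * Real.sqrt ((k : ℝ) - 1)) ∧
      cNeg (k - 1) ≥ 1 / (4 * Real.sqrt ((k : ℝ) - 1))) := by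
  constructor
  · intro h5 _
    obtain ⟨r, rfl⟩ := Nat.exists_eq_add_of_le h5
    have hval : 1 / (((5 + r : ℕ) : ℝ) - 1 / 2) = 2 / (9 + 2 * r) := by
      have h1 : ((5 + r : ℕ) : ℝ) - 1 / 2 = (9 + 2 * r) / 2 := by push_cast; ring
      rw [h1, one_div_div]
    rw [hval]
    exact rook_bound r
  · intro h16
    -- the least power `2 ^ j ≥ k` is `2 * 2 ^ (j - 1)` with `2 ^ (j - 1) ≤ k - 1`
    have hk := Nat.le_pow_clog (b := 2) (by norm_num) k
    have hlt := Nat.pow_pred_clog_lt_self (b := 2) (by norm_num) (x := k) (by omega)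
    set j := Nat.clog 2 k with hj
    have hj0 : 0 < j := Nat.clog_pos (by norm_num) (by omega)
    have hle : 2 ^ j + 2 ≤ 2 * k := by
      have : 2 ^ j = 2 * 2 ^ j.pred := by
        rw [← pow_succ', ← Nat.succ_eq_add_one, Nat.succ_pred_eq_of_pos hj0]
      omega
    have hle' : (2 : ℝ) ^ j + 2 ≤ 2 * k := by exact_mod_cast hle
    have hb : 1 / (4 * Real.sqrt ((k : ℝ) - 1)) ≤ 1 / (2 * Real.sqrt (2 * 2 ^ j)) := by
      have h4 : Real.sqrt (2 * 2 ^ j) ≤ 2 * Real.sqrt ((k : ℝ) - 1) := by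
        rw [← Real.sqrt_sq (show (0 : ℝ) ≤ 2 by norm_num), ← Real.sqrt_mul (by norm_num)]
        apply Real.sqrt_le_sqrt
        norm_num
        linarith
      apply one_div_le_one_div_of_le (by positivity)
      linarith
    obtain ⟨h1, h2⟩ := hadamard_bound (by omega) hk
    exact ⟨hb.trans h1, hb.trans h2⟩
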